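/- arXiv:0906.4305 — 7 statements merged into one kernel-verified Lean document; each statement's English description precedes it below -/
import Mathlib

section
/- Let n ≥ 1 be an integer, I ⊆ ℝ open, and α : I → ℂ twice differentiable with |α'(s)| = 1 and α(s) ≠ 0 for all s ∈ I. Let θ, φ : I → ℝ be differentiable with α'(s) = e^{i·θ(s)} and α(s) = |α(s)|·e^{i·φ(s)} for all s. Set β(s) = α(s)ⁿ and let κ_{αⁿ}(s) = Im(conj(β'(s))·β''(s)) / |β'(s)|³ be the curvature of the planar curve αⁿ. Then for all s ∈ I, |α(s)|^{n−1}·(θ'(s) + (n−1)·φ'(s)) = n·|α(s)|^{2n−2}·κ_{αⁿ}(s). (This gives the geometric interpretation of the quantity A_α = |α|^{n−1}·G'_α, with G_α = arg α' + (n−1)·arg α, as a multiple of |α|^{2n−2} times the curvature of αⁿ.) -/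
/-- Geometric interpretation of `A_α = |α|^{n-1}·G'_α` with `G_α = arg α' + (n−1) arg α`:
for a twice differentiable, nonvanishing, unit-speed planar curve `α` with argument lifts
`θ` of `α'` and `φ` of `α`, setting `β = αⁿ` and letting `κ_{αⁿ}` denote the curvature of
`β`, one has `|α|^{n−1}(θ' + (n−1)φ') = n·|α|^{2n−2}·κ_{αⁿ}`. -/
theorem stmt_7 (n : ℕ) (hn : 1 ≤ n) (I : Set ℝ) (hI : IsOpen I)
    (α : ℝ → ℂ) (θ φ : ℝ → ℝ)
    (hα : ∀ s ∈ I, DifferentiableAt ℝ α s ∧ DifferentiableAt ℝ (deriv α) s)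
    (hunit : ∀ s ∈ I, ‖deriv α s‖ = 1)
    (h0 : ∀ s ∈ I, α s ≠ 0)
    (hθ : ∀ s ∈ I, DifferentiableAt ℝ θ s)
    (hφ : ∀ s ∈ I, DifferentiableAt ℝ φ s)
    (hθlift : ∀ s ∈ I, deriv α s = Complex.exp (Complex.I * θ s))
    (hφlift : ∀ s ∈ I, α s = (‖α s‖ : ℂ) * Complex.exp (Complex.I * φ s))
    (β : ℝ → ℂ) (hβ : ∀ s, β s = α s ^ n)
    (κ : ℝ → ℝ)
    (hκ : ∀ s, κ s = ((starRingEnd ℂ) (deriv β s) * deriv (deriv β) s).im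
        / ‖deriv β s‖ ^ 3) :
    ∀ s ∈ I,
      ‖α s‖ ^ (n - 1) * (deriv θ s + ((n : ℝ) - 1) * deriv φ s)
        = (n : ℝ) * ‖α s‖ ^ (2 * n - 2) * κ s := by
  intro s hs
  obtain ⟨m, rfl⟩ : ∃ m, n = m + 1 := ⟨n - 1, by omega⟩
  have hβ' : β = fun s => α s ^ (m + 1) := funext hβ
  have hd : ∀ t ∈ I, deriv β t
      = (((m + 1 : ℝ) * ‖α t‖ ^ m : ℝ) : ℂ)
        * Complex.exp (Complex.I * ((θ t + m * φ t : ℝ) : ℂ)) := by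
    intro t ht
    have h1 := ((hα t ht).1.hasDerivAt.pow (m + 1)).deriv
    have h2 : deriv β t = ((m + 1 : ℕ) : ℂ) * α t ^ m * deriv α t := by
      rw [hβ']
      exact h1
    have h3 : α t ^ m = (‖α t‖ : ℂ) ^ m * Complex.exp (m * (Complex.I * φ t)) := by
      conv_lhs => rw [hφlift t ht]
      rw [mul_pow, ← Complex.exp_nat_mul]
    have h4 : Complex.exp (Complex.I * ((θ t + m * φ t : ℝ) : ℂ))
        = Complex.exp (m * (Complex.I * φ t)) * Complex.exp (Complex.I * θ t) := by
      rw [← Complex.exp_add]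
      congr 1
      push_cast
      ring
    rw [h2, h3, h4, hθlift t ht]
    push_cast
    ring
  have hr : DifferentiableAt ℝ (fun t => (m + 1 : ℝ) * ‖α t‖ ^ m) s :=
    (((hα s hs).1.norm ℝ (h0 s hs)).pow m).const_mul _
  have hρ := hr.hasDerivAt.ofReal_comp
  have hψ : HasDerivAt (fun t => ((θ t + m * φ t : ℝ) : ℂ))
      ((deriv θ s + m * deriv φ s : ℝ) : ℂ) s :=
    ((hθ s hs).hasDerivAt.add ((hφ s hs).hasDerivAt.const_mul (m : ℝ))).ofReal_comp
  have hdd := hρ.mul (hψ.const_mul Complex.I).cexp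
  have heq : deriv β =ᶠ[nhds s] _ :=
    Filter.eventuallyEq_of_mem (hI.mem_nhds hs) hd
  have hdd' := heq.deriv_eq.trans hdd.deriv
  have hpos : 0 < ‖α s‖ := norm_pos_iff.mpr (h0 s hs)
  have hn1 : (0 : ℝ) < (m + 1 : ℝ) * ‖α s‖ ^ m := by positivity
  have hnorm : ‖deriv β s‖ = (m + 1 : ℝ) * ‖α s‖ ^ m := by
    rw [hd s hs, norm_mul, mul_comm Complex.I, Complex.norm_exp_ofReal_mul_I, mul_one,
      Complex.norm_real, Real.norm_of_nonneg hn1.le]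
  have him : ((starRingEnd ℂ) (deriv β s) * deriv (deriv β) s).im
      = ((m + 1 : ℝ) * ‖α s‖ ^ m) ^ 2 * (deriv θ s + m * deriv φ s) := by
    rw [hdd', hd s hs]
    generalize deriv (fun t => (m + 1 : ℝ) * ‖α t‖ ^ m) s = ρ'
    generalize (m + 1 : ℝ) * ‖α s‖ ^ m = ρ
    generalize deriv θ s + m * deriv φ s = ω
    generalize θ s + m * φ s = ψ
    have hE : (starRingEnd ℂ) (Complex.exp (Complex.I * (ψ : ℂ)))
        * Complex.exp (Complex.I * (ψ : ℂ)) = 1 := by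
      rw [← Complex.exp_conj, ← Complex.exp_add]
      simp
    have : (starRingEnd ℂ) ((ρ : ℂ) * Complex.exp (Complex.I * (ψ : ℂ)))
        * ((ρ' : ℂ) * Complex.exp (Complex.I * (ψ : ℂ))
          + (ρ : ℂ) * (Complex.exp (Complex.I * (ψ : ℂ)) * (Complex.I * (ω : ℂ))))
        = ((ρ * ρ' : ℝ) : ℂ) + ((ρ ^ 2 * ω : ℝ) : ℂ) * Complex.I := by
      rw [map_mul, Complex.conj_ofReal]
      push_cast
      linear_combination ((ρ : ℂ) * ρ' + ρ ^ 2 * ω * Complex.I) * hE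
    rw [this, Complex.add_im, Complex.ofReal_im, Complex.im_ofReal_mul, Complex.I_im]
    ring
  rw [hκ s, him, hnorm]
  have e1 : m + 1 - 1 = m := by omega
  have e2 : 2 * (m + 1) - 2 = m + m := by omega
  rw [e1, e2, pow_add]
  push_cast
  have hm : (m + 1 : ℝ) ≠ 0 := by positivity
  have hp : ‖α s‖ ^ m ≠ 0 := by positivity
  generalize ‖α s‖ ^ m = r at *
  field_simp
  ring
end

section
/- Let n₁, n₂ be positive integers and define γ : ℝ → ℂ² by γ(s) = (1/√(n₁+n₂))·(√n₁·e^{i√(n₂/n₁)·s}, √n₂·e^{−i√(n₁/n₂)·s}). Then γ is a unit-speed Legendrian curve in S³: |γ₁|² + |γ₂|² = 1, |γ₁'|² + |γ₂'|² = 1 and γ₁'·conj(γ₁) + γ₂'·conj(γ₂) = 0; moreover γ₁(s)γ₂'(s) − γ₂(s)γ₁'(s) = −i·e^{i(√(n₂/n₁) − √(n₁/n₂))·s}, so γ has constant curvature c = √(n₂/n₁) − √(n₁/n₂); and γ is closed: γ(s + 2π√(n₁n₂)) = γ(s) for all s ∈ ℝ. -/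
/-- For positive integers `n₁, n₂`, the curve
`γ(s) = (1/√(n₁+n₂))(√n₁·e^{i√(n₂/n₁)s}, √n₂·e^{−i√(n₁/n₂)s})` is a closed unit-speed
Legendrian curve in S³ with `γ₁γ₂' − γ₂γ₁' = −i·e^{i(√(n₂/n₁)−√(n₁/n₂))s}`, hence of
constant curvature `√(n₂/n₁) − √(n₁/n₂)`, and with period `2π√(n₁n₂)`. -/
theorem stmt_11 (n₁ n₂ : ℕ) (h₁ : 0 < n₁) (h₂ : 0 < n₂)
    (γ₁ γ₂ : ℝ → ℂ)
    (hγ₁ : ∀ s : ℝ, γ₁ s = ((Real.sqrt n₁ / Real.sqrt (n₁ + n₂) : ℝ) : ℂ) *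
        Complex.exp (Complex.I * (Real.sqrt ((n₂ : ℝ) / n₁) * s)))
    (hγ₂ : ∀ s : ℝ, γ₂ s = ((Real.sqrt n₂ / Real.sqrt (n₁ + n₂) : ℝ) : ℂ) *
        Complex.exp (-Complex.I * (Real.sqrt ((n₁ : ℝ) / n₂) * s))) :
    ∀ s : ℝ,
      ‖γ₁ s‖ ^ 2 + ‖γ₂ s‖ ^ 2 = 1 ∧
      ‖deriv γ₁ s‖ ^ 2 + ‖deriv γ₂ s‖ ^ 2 = 1 ∧
      deriv γ₁ s * (starRingEnd ℂ) (γ₁ s) + deriv γ₂ s * (starRingEnd ℂ) (γ₂ s) = 0 ∧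
      γ₁ s * deriv γ₂ s - γ₂ s * deriv γ₁ s
        = -Complex.I * Complex.exp (Complex.I *
            ((Real.sqrt ((n₂ : ℝ) / n₁) - Real.sqrt ((n₁ : ℝ) / n₂)) * s)) ∧
      γ₁ (s + 2 * Real.pi * Real.sqrt ((n₁ : ℝ) * n₂)) = γ₁ s ∧
      γ₂ (s + 2 * Real.pi * Real.sqrt ((n₁ : ℝ) * n₂)) = γ₂ s := by
  intro s
  have ha : (0:ℝ) < n₁ := by exact_mod_cast h₁
  have hb : (0:ℝ) < n₂ := by exact_mod_cast h₂
  have hsa := Real.sqrt_pos.2 ha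
  have hsb := Real.sqrt_pos.2 hb
  have hsc := Real.sqrt_pos.2 (add_pos ha hb)
  have qa := Real.sq_sqrt ha.le
  have qb := Real.sq_sqrt hb.le
  have qc := Real.sq_sqrt (add_pos ha hb).le
  have hpp1 : Real.sqrt ((n₂ : ℝ) / n₁) * Real.sqrt ((n₁ : ℝ) * n₂) = n₂ := by
    rw [Real.sqrt_div hb.le, Real.sqrt_mul ha.le]
    field_simp
    exact qb
  have hpp2 : Real.sqrt ((n₁ : ℝ) / n₂) * Real.sqrt ((n₁ : ℝ) * n₂) = n₁ := by
    rw [Real.sqrt_div ha.le, Real.sqrt_mul ha.le]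
    field_simp
    exact qa
  have hAp : Real.sqrt n₁ / Real.sqrt (n₁ + n₂) * Real.sqrt ((n₂ : ℝ) / n₁)
      = Real.sqrt n₂ / Real.sqrt (n₁ + n₂) := by
    rw [Real.sqrt_div hb.le]; field_simp
  have hBq : Real.sqrt n₂ / Real.sqrt (n₁ + n₂) * Real.sqrt ((n₁ : ℝ) / n₂)
      = Real.sqrt n₁ / Real.sqrt (n₁ + n₂) := by
    rw [Real.sqrt_div ha.le]; field_simp
  have hAB : (Real.sqrt n₁ / Real.sqrt (n₁ + n₂)) ^ 2
      + (Real.sqrt n₂ / Real.sqrt (n₁ + n₂)) ^ 2 = 1 := by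
    rw [div_pow, div_pow, qa, qb, qc]; field_simp
  generalize Real.sqrt n₁ / Real.sqrt (n₁ + n₂) = A at *
  generalize Real.sqrt n₂ / Real.sqrt (n₁ + n₂) = B at *
  generalize Real.sqrt ((n₂ : ℝ) / n₁) = p at *
  generalize Real.sqrt ((n₁ : ℝ) / n₂) = q at *
  generalize Real.sqrt ((n₁ : ℝ) * n₂) = T at *
  have hApC : (A : ℂ) * p = B := by exact_mod_cast hAp
  have hBqC : (B : ℂ) * q = A := by exact_mod_cast hBq
  have hABC : (A : ℂ) ^ 2 + (B : ℂ) ^ 2 = 1 := by exact_mod_cast hAB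
  have hT1 : (p : ℂ) * T = n₂ := by exact_mod_cast hpp1
  have hT2 : (q : ℂ) * T = n₁ := by exact_mod_cast hpp2
  have key : ∀ (K w : ℂ), deriv (fun t : ℝ => K * Complex.exp (w * t)) s
      = K * w * Complex.exp (w * s) := by
    intro K w
    have h1 : HasDerivAt (fun t : ℝ => w * (t : ℂ)) (w * 1) s :=
      (Complex.ofRealCLM.hasDerivAt (x := s)).const_mul w
    rw [(h1.cexp.const_mul K).deriv]
    ring
  have d1 : deriv γ₁ s = Complex.I * B * Complex.exp (Complex.I * (p * s)) := by
    have : γ₁ = fun t : ℝ => (A : ℂ) * Complex.exp ((Complex.I * p) * t) := by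
      funext t; rw [hγ₁, mul_assoc Complex.I]
    rw [this, key, ← hApC, mul_assoc Complex.I (p : ℂ)]; ring
  have d2 : deriv γ₂ s = -Complex.I * A * Complex.exp (-Complex.I * (q * s)) := by
    have : γ₂ = fun t : ℝ => (B : ℂ) * Complex.exp ((-Complex.I * q) * t) := by
      funext t; rw [hγ₂, mul_assoc (-Complex.I)]
    rw [this, key, ← hBqC, mul_assoc (-Complex.I) (q : ℂ)]; ring
  have n1 : ‖Complex.exp (Complex.I * (p * s))‖ = 1 := by
    simp [Complex.norm_exp]
  have n2 : ‖Complex.exp (-Complex.I * (q * s))‖ = 1 := by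
    simp [Complex.norm_exp]
  have c1 := Complex.mul_conj' (Complex.exp (Complex.I * (p * s)))
  have c2 := Complex.mul_conj' (Complex.exp (-Complex.I * (q * s)))
  rw [n1] at c1
  rw [n2] at c2
  have he : Complex.exp (Complex.I * ((p - q) * s)) =
      Complex.exp (Complex.I * (p * s)) * Complex.exp (-Complex.I * (q * s)) := by
    rw [← Complex.exp_add]; congr 1; ring
  refine ⟨?_, ?_, ?_, ?_, ?_, ?_⟩
  · rw [hγ₁, hγ₂, norm_mul, norm_mul, n1, n2]
    simpa using hAB
  · rw [d1, d2, norm_mul _ (Complex.exp _), norm_mul _ (Complex.exp _), n1, n2]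
    simp
    linarith
  · rw [d1, d2, hγ₁, hγ₂, map_mul, map_mul, Complex.conj_ofReal, Complex.conj_ofReal]
    push_cast at c1 c2
    linear_combination Complex.I * B * A * (c1 - c2)
  · rw [d1, d2, hγ₁, hγ₂, he]
    linear_combination (-Complex.I * Complex.exp (Complex.I * (p * s)) *
      Complex.exp (-Complex.I * (q * s))) * hABC
  · rw [hγ₁, hγ₁]
    congr 1
    rw [Complex.exp_eq_exp_iff_exists_int]
    refine ⟨n₂, ?_⟩
    push_cast
    linear_combination (2 * Complex.I * Real.pi) * hT1
  · rw [hγ₂, hγ₂]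
    congr 1
    rw [Complex.exp_eq_exp_iff_exists_int]
    refine ⟨-n₁, ?_⟩
    push_cast
    linear_combination (-2 * Complex.I * Real.pi) * hT2
end

section
/- Let α = (α₁, α₂) : I → ℂ² be a unit-speed Legendrian curve in the anti-de Sitter space H³₁ (|α₁|² − |α₂|² = −1, |α₁'|² − |α₂'|² = 1, α₁'·conj(α₁) − α₂'·conj(α₂) = 0) and let η = (y₁, y₂, y₃) : I → ℝ³ be its projection, defined by y₁ + i·y₂ = α₁·conj(α₂) and y₃ = (|α₁|² + |α₂|²)/2. Then for all t ∈ I: (i) y₁² + y₂² − y₃² = −1/4 and y₃ ≥ 1/2, i.e. η lies on the hyperbolic plane H²(−1/2); (ii) η is parametrized by arclength for the Lorentzian metric: y₁'² + y₂'² − y₃'² = 1; (iii) |α₁|² = −1/2 + y₃; and (iv) Im(α₁'·conj(α₁)) = y₁·y₂' − y₂·y₁'. -/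
/-- The projection `η = (y₁,y₂,y₃)`, `y₁ + iy₂ = α₁·conj α₂`, `y₃ = (|α₁|² + |α₂|²)/2`,
of a unit-speed Legendrian curve `α = (α₁,α₂)` in the anti-de Sitter space H³₁ lies on the
hyperbolic plane H²(−1/2) (with `y₃ ≥ 1/2`), is parametrized by arclength for the
Lorentzian metric, satisfies `|α₁|² = −1/2 + y₃` and
`Im(α₁'·conj α₁) = y₁y₂' − y₂y₁'`. -/
theorem stmt_13 (I : Set ℝ) (hI : IsOpen I) (α₁ α₂ : ℝ → ℂ)
    (hdiff : ∀ t ∈ I, DifferentiableAt ℝ α₁ t ∧ DifferentiableAt ℝ α₂ t)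
    (hH : ∀ t ∈ I, ‖α₁ t‖ ^ 2 - ‖α₂ t‖ ^ 2 = -1)
    (hspeed : ∀ t ∈ I, ‖deriv α₁ t‖ ^ 2 - ‖deriv α₂ t‖ ^ 2 = 1)
    (hLeg : ∀ t ∈ I,
      deriv α₁ t * (starRingEnd ℂ) (α₁ t) - deriv α₂ t * (starRingEnd ℂ) (α₂ t) = 0)
    (y₁ y₂ y₃ : ℝ → ℝ)
    (hy₁ : ∀ t, y₁ t = (α₁ t * (starRingEnd ℂ) (α₂ t)).re)
    (hy₂ : ∀ t, y₂ t = (α₁ t * (starRingEnd ℂ) (α₂ t)).im)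
    (hy₃ : ∀ t, y₃ t = (‖α₁ t‖ ^ 2 + ‖α₂ t‖ ^ 2) / 2) :
    ∀ t ∈ I,
      (y₁ t ^ 2 + y₂ t ^ 2 - y₃ t ^ 2 = -(1 / 4) ∧ 1 / 2 ≤ y₃ t) ∧
      deriv y₁ t ^ 2 + deriv y₂ t ^ 2 - deriv y₃ t ^ 2 = 1 ∧
      ‖α₁ t‖ ^ 2 = -(1 / 2) + y₃ t ∧
      (deriv α₁ t * (starRingEnd ℂ) (α₁ t)).im = y₁ t * deriv y₂ t - y₂ t * deriv y₁ t := by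
  intro t ht
  obtain ⟨hd1, hd2⟩ := hdiff t ht
  have h1 := hd1.hasDerivAt
  have h2 := hd2.hasDerivAt
  have a : HasDerivAt (fun x => (α₁ x).re) (deriv α₁ t).re t :=
    Complex.reCLM.hasFDerivAt.comp_hasDerivAt t h1
  have b : HasDerivAt (fun x => (α₁ x).im) (deriv α₁ t).im t :=
    Complex.imCLM.hasFDerivAt.comp_hasDerivAt t h1
  have c : HasDerivAt (fun x => (α₂ x).re) (deriv α₂ t).re t :=
    Complex.reCLM.hasFDerivAt.comp_hasDerivAt t h2
  have d : HasDerivAt (fun x => (α₂ x).im) (deriv α₂ t).im t :=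
    Complex.imCLM.hasFDerivAt.comp_hasDerivAt t h2
  have e1 : y₁ = fun t => (α₁ t).re * (α₂ t).re + (α₁ t).im * (α₂ t).im := by
    funext s; rw [hy₁]; simp
  have e2 : y₂ = fun t => (α₁ t).im * (α₂ t).re - (α₁ t).re * (α₂ t).im := by
    funext s; rw [hy₂]; simp; ring
  have e3 : y₃ = fun t => ((α₁ t).re * (α₁ t).re + (α₁ t).im * (α₁ t).im
      + ((α₂ t).re * (α₂ t).re + (α₂ t).im * (α₂ t).im)) / 2 := by
    funext s; rw [hy₃, Complex.sq_norm, Complex.sq_norm, Complex.normSq_apply,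
      Complex.normSq_apply]
  have d1 : deriv y₁ t = ((deriv α₁ t).re * (α₂ t).re + (α₁ t).re * (deriv α₂ t).re) +
      ((deriv α₁ t).im * (α₂ t).im + (α₁ t).im * (deriv α₂ t).im) := by
    rw [e1]; exact ((a.mul c).add (b.mul d)).deriv
  have d2 : deriv y₂ t = ((deriv α₁ t).im * (α₂ t).re + (α₁ t).im * (deriv α₂ t).re) -
      ((deriv α₁ t).re * (α₂ t).im + (α₁ t).re * (deriv α₂ t).im) := by
    rw [e2]; exact ((b.mul c).sub (a.mul d)).deriv
  have d3 : deriv y₃ t = (((deriv α₁ t).re * (α₁ t).re + (α₁ t).re * (deriv α₁ t).re) + ((deriv α₁ t).im * (α₁ t).im + (α₁ t).im * (deriv α₁ t).im) +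
      (((deriv α₂ t).re * (α₂ t).re + (α₂ t).re * (deriv α₂ t).re) + ((deriv α₂ t).im * (α₂ t).im + (α₂ t).im * (deriv α₂ t).im))) / 2 := by
    rw [e3]; exact ((((a.mul a).add (b.mul b)).add ((c.mul c).add (d.mul d))).div_const 2).deriv
  have H := hH t ht
  have S := hspeed t ht
  have Q := congrArg Complex.im (hLeg t ht)
  rw [d1, d2, d3, e1, e2, e3]
  simp only [Complex.sq_norm, Complex.normSq_apply] at H S ⊢
  simp at Q ⊢
  clear d1 d2 d3 e1 e2 e3
  generalize (deriv α₁ t).re = ua at *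
  generalize (deriv α₁ t).im = ub at *
  generalize (deriv α₂ t).re = va at *
  generalize (deriv α₂ t).im = vb at *
  generalize (α₁ t).re = p at *
  generalize (α₁ t).im = q at *
  generalize (α₂ t).re = r at *
  generalize (α₂ t).im = s at *
  refine ⟨⟨?_, ?_⟩, ?_, ?_, ?_⟩
  · linear_combination (-(p * p + q * q - (r * r + s * s)) / 4 + 1 / 4) * H
  · nlinarith [mul_self_nonneg p, mul_self_nonneg q]
  · linear_combination (r * r + s * s - p * p - q * q) * S - H
      + ((ub * p - ua * q) - (vb * r - va * s)) * Q
  · linarith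
  · linear_combination (ub * p - ua * q) * H - (p * p + q * q) * Q
end

section
/- Let γ = (γ₁, γ₂) : I₁ → ℂ² be a unit-speed Legendrian curve in S³ (|γ₁|² + |γ₂|² = 1, |γ₁'|² + |γ₂'|² = 1, γ₁'·conj(γ₁) + γ₂'·conj(γ₂) = 0) and let α = (α₁, α₂) : I₂ → ℂ² be a unit-speed Legendrian curve in H³₁ (|α₁|² − |α₂|² = −1, |α₁'|² − |α₂'|² = 1, α₁'·conj(α₁) − α₂'·conj(α₂) = 0). Define φ : I₁ × I₂ → ℂ² by φ(s,t) = (γ₁(s)·α₁(t), γ₂(s)·α₂(t)). Then for all (s,t): the Hermitian product (∂ₛφ, ∂ₜφ) = 0, and (∂ₛφ, ∂ₛφ) = (∂ₜφ, ∂ₜφ) = |γ₁(s)|² + |α₁(t)|². Hence φ is a conformal Lagrangian immersion into ℂ² with induced metric g = (|γ₁|² + |α₁|²)·(ds² + dt²). -/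
/-- The Hermitian product on ℂ²: (z,w) = z₁·conj w₁ + z₂·conj w₂. -/
noncomputable def herm2 (z w : ℂ × ℂ) : ℂ :=
  z.1 * (starRingEnd ℂ) w.1 + z.2 * (starRingEnd ℂ) w.2

/-- For a unit-speed Legendrian curve `γ` in S³ and a unit-speed Legendrian curve `α` in the
anti-de Sitter space H³₁, the map `φ(s,t) = (γ₁(s)α₁(t), γ₂(s)α₂(t))` satisfies
`(∂ₛφ,∂ₜφ) = 0` and `(∂ₛφ,∂ₛφ) = (∂ₜφ,∂ₜφ) = |γ₁(s)|² + |α₁(t)|²`: it is a conformal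
Lagrangian immersion with induced metric `(|γ₁|² + |α₁|²)(ds² + dt²)`. -/
theorem stmt_15 (I₁ I₂ : Set ℝ) (hI₁ : IsOpen I₁) (hI₂ : IsOpen I₂)
    (γ₁ γ₂ α₁ α₂ : ℝ → ℂ)
    (hγd : ∀ s ∈ I₁, DifferentiableAt ℝ γ₁ s ∧ DifferentiableAt ℝ γ₂ s)
    (hαd : ∀ t ∈ I₂, DifferentiableAt ℝ α₁ t ∧ DifferentiableAt ℝ α₂ t)
    (hγS : ∀ s ∈ I₁, ‖γ₁ s‖ ^ 2 + ‖γ₂ s‖ ^ 2 = 1)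
    (hγspeed : ∀ s ∈ I₁, ‖deriv γ₁ s‖ ^ 2 + ‖deriv γ₂ s‖ ^ 2 = 1)
    (hγLeg : ∀ s ∈ I₁,
      deriv γ₁ s * (starRingEnd ℂ) (γ₁ s) + deriv γ₂ s * (starRingEnd ℂ) (γ₂ s) = 0)
    (hαH : ∀ t ∈ I₂, ‖α₁ t‖ ^ 2 - ‖α₂ t‖ ^ 2 = -1)
    (hαspeed : ∀ t ∈ I₂, ‖deriv α₁ t‖ ^ 2 - ‖deriv α₂ t‖ ^ 2 = 1)
    (hαLeg : ∀ t ∈ I₂,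
      deriv α₁ t * (starRingEnd ℂ) (α₁ t) - deriv α₂ t * (starRingEnd ℂ) (α₂ t) = 0)
    (φ : ℝ × ℝ → ℂ × ℂ)
    (hφ : ∀ p : ℝ × ℝ, φ p = (γ₁ p.1 * α₁ p.2, γ₂ p.1 * α₂ p.2)) :
    ∀ s ∈ I₁, ∀ t ∈ I₂,
      herm2 (fderiv ℝ φ (s, t) (1, 0)) (fderiv ℝ φ (s, t) (0, 1)) = 0 ∧
      herm2 (fderiv ℝ φ (s, t) (1, 0)) (fderiv ℝ φ (s, t) (1, 0))
        = ((‖γ₁ s‖ ^ 2 + ‖α₁ t‖ ^ 2 : ℝ) : ℂ) ∧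
      herm2 (fderiv ℝ φ (s, t) (0, 1)) (fderiv ℝ φ (s, t) (0, 1))
        = ((‖γ₁ s‖ ^ 2 + ‖α₁ t‖ ^ 2 : ℝ) : ℂ) := by
  intro s hs t ht
  have g1 := (hγd s hs).1.hasDerivAt
  have g2 := (hγd s hs).2.hasDerivAt
  have a1 := (hαd t ht).1.hasDerivAt
  have a2 := (hαd t ht).2.hasDerivAt
  have hS := hγS s hs
  have hsp := hγspeed s hs
  have hL := hγLeg s hs
  have hH := hαH t ht
  have hasp := hαspeed t ht
  have hAL := hαLeg t ht
  have hfun : φ = fun p : ℝ × ℝ => (γ₁ p.1 * α₁ p.2, γ₂ p.1 * α₂ p.2) := funext hφ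
  have key : ∀ (g a : ℝ → ℂ) (dg da : ℂ), HasDerivAt g dg s → HasDerivAt a da t →
      ∃ L : ℝ × ℝ →L[ℝ] ℂ, HasFDerivAt (fun p : ℝ × ℝ => g p.1 * a p.2) L (s, t) ∧
        L (1, 0) = dg * a t ∧ L (0, 1) = g s * da := by
    intro g a dg da hg ha
    have h1 : HasFDerivAt (fun p : ℝ × ℝ => g p.1) _ (s, t) :=
      HasFDerivAt.comp (s, t) (g := g) (f := Prod.fst) hg.hasFDerivAt hasFDerivAt_fst
    have h2 : HasFDerivAt (fun p : ℝ × ℝ => a p.2) _ (s, t) :=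
      HasFDerivAt.comp (s, t) (g := a) (f := Prod.snd) ha.hasFDerivAt hasFDerivAt_snd
    refine ⟨_, h1.mul h2, ?_, ?_⟩
    · simp [mul_comm]
    · simp
  obtain ⟨L1, h1, h1s, h1t⟩ := key γ₁ α₁ _ _ g1 a1
  obtain ⟨L2, h2, h2s, h2t⟩ := key γ₂ α₂ _ _ g2 a2
  have hD : fderiv ℝ φ (s, t) = L1.prod L2 := by
    rw [hfun]; exact (h1.prodMk h2).fderiv
  rw [hD]
  simp only [herm2, ContinuousLinearMap.prod_apply, h1s, h1t, h2s, h2t]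
  have n1 : ‖deriv γ₁ s‖ ^ 2 * ‖γ₁ s‖ ^ 2 = ‖deriv γ₂ s‖ ^ 2 * ‖γ₂ s‖ ^ 2 := by
    have := congrArg norm (eq_neg_of_add_eq_zero_left hL)
    rw [norm_neg, norm_mul, norm_mul, RCLike.norm_conj, RCLike.norm_conj] at this
    rw [← mul_pow, ← mul_pow, this]
  have n2 : ‖deriv α₁ t‖ ^ 2 * ‖α₁ t‖ ^ 2 = ‖deriv α₂ t‖ ^ 2 * ‖α₂ t‖ ^ 2 := by
    have := congrArg norm (sub_eq_zero.mp hAL)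
    rw [norm_mul, norm_mul, RCLike.norm_conj, RCLike.norm_conj] at this
    rw [← mul_pow, ← mul_pow, this]
  have hA : α₁ t * (starRingEnd ℂ) (deriv α₁ t) = α₂ t * (starRingEnd ℂ) (deriv α₂ t) := by
    have := congrArg (starRingEnd ℂ) (sub_eq_zero.mp hAL)
    simp only [map_mul, Complex.conj_conj] at this
    linear_combination this
  refine ⟨?_, ?_, ?_⟩
  · simp only [map_mul]
    linear_combination (deriv γ₁ s * (starRingEnd ℂ) (γ₁ s)) * hA +
      (α₂ t * (starRingEnd ℂ) (deriv α₂ t)) * hL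
  · rw [Complex.mul_conj', Complex.mul_conj']
    norm_cast
    rw [norm_mul, norm_mul, mul_pow, mul_pow]
    generalize ‖deriv γ₁ s‖ ^ 2 = a, ‖γ₁ s‖ ^ 2 = b, ‖deriv γ₂ s‖ ^ 2 = da, ‖γ₂ s‖ ^ 2 = db at *
    obtain rfl : da = 1 - a := by linarith
    obtain rfl : db = 1 - b := by linarith
    have : ‖α₂ t‖ ^ 2 = ‖α₁ t‖ ^ 2 + 1 := by linarith
    rw [this]
    linear_combination -n1
  · rw [Complex.mul_conj', Complex.mul_conj']
    norm_cast
    rw [norm_mul, norm_mul, mul_pow, mul_pow]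
    generalize ‖deriv α₁ t‖ ^ 2 = a, ‖α₁ t‖ ^ 2 = b, ‖deriv α₂ t‖ ^ 2 = da, ‖α₂ t‖ ^ 2 = db at *
    obtain rfl : da = a - 1 := by linarith
    obtain rfl : db = b + 1 := by linarith
    have : ‖γ₂ s‖ ^ 2 = 1 - ‖γ₁ s‖ ^ 2 := by linarith
    rw [this]
    linear_combination -n2
end

section
/- Let γ = (γ₁, γ₂) : I₁ → ℂ² be a unit-speed Legendrian curve in S³ (|γ₁|² + |γ₂|² = 1, |γ₁'|² + |γ₂'|² = 1, γ₁'·conj(γ₁) + γ₂'·conj(γ₂) = 0) and α = (α₁, α₂) : I₂ → ℂ² a unit-speed Legendrian curve in H³₁ (|α₁|² − |α₂|² = −1, |α₁'|² − |α₂'|² = 1, α₁'·conj(α₁) − α₂'·conj(α₂) = 0), and let φ(s,t) = (γ₁(s)α₁(t), γ₂(s)α₂(t)). Then the complex determinant of the partial derivatives of φ factorizes as det_ℂ(∂ₛφ, ∂ₜφ) = (γ₁'(s)α₁(t))·(γ₂(s)α₂'(t)) − (γ₂'(s)α₂(t))·(γ₁(s)α₁'(t)) = (|γ₁(s)|² +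 |α₁(t)|²)·(γ₁(s)γ₂'(s) − γ₂(s)γ₁'(s))·(α₁(t)α₂'(t) − α₂(t)α₁'(t)). (This encodes the relation β_φ(s,t) = β_γ(s) + β_α(t) + π between the Lagrangian angle of the surface φ = γ ⊙ α and the Legendrian angles of the curves γ and α.) -/
/-- For a unit-speed Legendrian curve `γ` in S³ and a unit-speed Legendrian curve `α` in
H³₁, the surface `φ(s,t) = (γ₁(s)α₁(t), γ₂(s)α₂(t))` has complex Jacobian determinant
`det_ℂ(∂ₛφ, ∂ₜφ) = (γ₁'α₁)(γ₂α₂') − (γ₂'α₂)(γ₁α₁')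
  = (|γ₁|² + |α₁|²)(γ₁γ₂' − γ₂γ₁')(α₁α₂' − α₂α₁')`,
encoding `β_φ = β_γ + β_α + π`. -/
theorem stmt_16 (I₁ I₂ : Set ℝ) (hI₁ : IsOpen I₁) (hI₂ : IsOpen I₂)
    (γ₁ γ₂ α₁ α₂ : ℝ → ℂ)
    (hγd : ∀ s ∈ I₁, DifferentiableAt ℝ γ₁ s ∧ DifferentiableAt ℝ γ₂ s)
    (hαd : ∀ t ∈ I₂, DifferentiableAt ℝ α₁ t ∧ DifferentiableAt ℝ α₂ t)
    (hγS : ∀ s ∈ I₁, ‖γ₁ s‖ ^ 2 + ‖γ₂ s‖ ^ 2 = 1)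
    (hγspeed : ∀ s ∈ I₁, ‖deriv γ₁ s‖ ^ 2 + ‖deriv γ₂ s‖ ^ 2 = 1)
    (hγLeg : ∀ s ∈ I₁,
      deriv γ₁ s * (starRingEnd ℂ) (γ₁ s) + deriv γ₂ s * (starRingEnd ℂ) (γ₂ s) = 0)
    (hαH : ∀ t ∈ I₂, ‖α₁ t‖ ^ 2 - ‖α₂ t‖ ^ 2 = -1)
    (hαspeed : ∀ t ∈ I₂, ‖deriv α₁ t‖ ^ 2 - ‖deriv α₂ t‖ ^ 2 = 1)
    (hαLeg : ∀ t ∈ I₂,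
      deriv α₁ t * (starRingEnd ℂ) (α₁ t) - deriv α₂ t * (starRingEnd ℂ) (α₂ t) = 0)
    (φ : ℝ × ℝ → ℂ × ℂ)
    (hφ : ∀ p : ℝ × ℝ, φ p = (γ₁ p.1 * α₁ p.2, γ₂ p.1 * α₂ p.2)) :
    ∀ s ∈ I₁, ∀ t ∈ I₂,
      (fderiv ℝ φ (s, t) (1, 0)).1 * (fderiv ℝ φ (s, t) (0, 1)).2
          - (fderiv ℝ φ (s, t) (1, 0)).2 * (fderiv ℝ φ (s, t) (0, 1)).1
        = (deriv γ₁ s * α₁ t) * (γ₂ s * deriv α₂ t)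
            - (deriv γ₂ s * α₂ t) * (γ₁ s * deriv α₁ t) ∧
      (deriv γ₁ s * α₁ t) * (γ₂ s * deriv α₂ t)
          - (deriv γ₂ s * α₂ t) * (γ₁ s * deriv α₁ t)
        = ((‖γ₁ s‖ ^ 2 + ‖α₁ t‖ ^ 2 : ℝ) : ℂ) *
            (γ₁ s * deriv γ₂ s - γ₂ s * deriv γ₁ s) *
            (α₁ t * deriv α₂ t - α₂ t * deriv α₁ t) := by
  intro s hs t ht
  obtain ⟨hg1, hg2⟩ := hγd s hs
  obtain ⟨ha1, ha2⟩ := hαd t ht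
  refine ⟨?_, ?_⟩
  · have key : ∀ g a : ℝ → ℂ, DifferentiableAt ℝ g s → DifferentiableAt ℝ a t →
        HasFDerivAt (fun p : ℝ × ℝ => g p.1 * a p.2)
          (g s • ((ContinuousLinearMap.toSpanSingleton ℝ (deriv a t)).comp
              (ContinuousLinearMap.snd ℝ ℝ ℝ))
            + a t • ((ContinuousLinearMap.toSpanSingleton ℝ (deriv g s)).comp
              (ContinuousLinearMap.fst ℝ ℝ ℝ))) (s, t) := by
      intro g a hg ha
      have h1 : HasFDerivAt (fun p : ℝ × ℝ => g p.1) _ (s, t) :=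
        HasFDerivAt.comp (s, t) (g := g) (f := Prod.fst) hg.hasDerivAt.hasFDerivAt hasFDerivAt_fst
      have h2 : HasFDerivAt (fun p : ℝ × ℝ => a p.2) _ (s, t) :=
        HasFDerivAt.comp (s, t) (g := a) (f := Prod.snd) ha.hasDerivAt.hasFDerivAt hasFDerivAt_snd
      exact h1.mul h2
    have hφ' : φ = fun p : ℝ × ℝ => (γ₁ p.1 * α₁ p.2, γ₂ p.1 * α₂ p.2) := funext hφ
    have hf := (key γ₁ α₁ hg1 ha1).prodMk (key γ₂ α₂ hg2 ha2)
    rw [hφ', hf.fderiv]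
    simp
    ring
  · have e1 := hγLeg s hs
    have e2 := hαLeg t ht
    have n1 : γ₁ s * (starRingEnd ℂ) (γ₁ s) + γ₂ s * (starRingEnd ℂ) (γ₂ s) = 1 := by
      rw [Complex.mul_conj', Complex.mul_conj']
      exact_mod_cast hγS s hs
    have n2 : α₁ t * (starRingEnd ℂ) (α₁ t) - α₂ t * (starRingEnd ℂ) (α₂ t) = -1 := by
      rw [Complex.mul_conj', Complex.mul_conj']
      exact_mod_cast hαH t ht
    have n3 : ((‖γ₁ s‖ ^ 2 + ‖α₁ t‖ ^ 2 : ℝ) : ℂ)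
        = γ₁ s * (starRingEnd ℂ) (γ₁ s) + α₁ t * (starRingEnd ℂ) (α₁ t) := by
      rw [Complex.mul_conj', Complex.mul_conj']
      push_cast
      rfl
    rw [n3]
    generalize (starRingEnd ℂ) (γ₁ s) = c1 at *
    generalize (starRingEnd ℂ) (γ₂ s) = c2 at *
    generalize (starRingEnd ℂ) (α₁ t) = d1 at *
    generalize (starRingEnd ℂ) (α₂ t) = d2 at *
    generalize γ₁ s = x1 at *
    generalize γ₂ s = x2 at *
    generalize α₁ t = y1 at *
    generalize α₂ t = y2 at *
    generalize deriv γ₁ s = p1 at *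
    generalize deriv γ₂ s = p2 at *
    generalize deriv α₁ t = q1 at *
    generalize deriv α₂ t = q2 at *
    obtain ⟨w, hw⟩ : ∃ w, w = x1 * p2 - x2 * p1 := ⟨_, rfl⟩
    obtain ⟨v, hv⟩ : ∃ v, v = y1 * q2 - y2 * q1 := ⟨_, rfl⟩
    have f1 : p1 = -w * c2 := by
      rw [hw]; linear_combination x1 * e1 - p1 * n1
    have f2 : p2 = w * c1 := by
      rw [hw]; linear_combination x2 * e1 - p2 * n1
    have f3 : q1 = -v * d2 := by
      rw [hv]; linear_combination q1 * n2 - y1 * e2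
    have f4 : q2 = -v * d1 := by
      rw [hv]; linear_combination q2 * n2 - y2 * e2
    rw [← hw, ← hv, f1, f2, f3, f4]
    linear_combination w * v * (y1 * d1) * n1 - w * v * (x1 * c1) * n2
end

section
/- For δ > 0 define α : ℝ → ℂ² by α(t) = (sinh δ · e^{i·coth δ·t}, cosh δ · e^{i·tanh δ·t}). Then α is a unit-speed Legendrian curve in the anti-de Sitter space H³₁: |α₁|² − |α₂|² = −1, |α₁'|² − |α₂'|² = 1 and α₁'·conj(α₁) − α₂'·conj(α₂) = 0 for all t ∈ ℝ. Moreover α is periodic (there exists T > 0 with α(t+T) = α(t) for all t) if and only if (tanh δ)² is a rational number. -/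
lemma aux_deriv (a k : ℝ) (f : ℝ → ℂ)
    (h : ∀ t : ℝ, f t = (a : ℂ) * Complex.exp (Complex.I * ((k : ℂ) * t))) (t : ℝ) :
    deriv f t = Complex.I * k * f t := by
  have hf : f = fun t : ℝ => (a : ℂ) * Complex.exp (Complex.I * ((k : ℂ) * t)) := funext h
  have h0 : HasDerivAt (fun t : ℝ => (t : ℂ)) 1 t := Complex.ofRealCLM.hasDerivAt
  have h1 := ((((h0.const_mul (k : ℂ)).const_mul Complex.I).cexp).const_mul (a : ℂ))
  rw [h t, hf, h1.deriv]
  ring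

lemma aux_norm (a k : ℝ) (f : ℝ → ℂ)
    (h : ∀ t : ℝ, f t = (a : ℂ) * Complex.exp (Complex.I * ((k : ℂ) * t))) (t : ℝ) :
    ‖f t‖ ^ 2 = a ^ 2 := by
  have : Complex.I * ((k : ℂ) * t) = ((k * t : ℝ) : ℂ) * Complex.I := by push_cast; ring
  rw [h t, this, norm_mul, Complex.norm_exp_ofReal_mul_I, Complex.norm_real, mul_one,
    Real.norm_eq_abs, sq_abs]

lemma aux_dnorm (a k : ℝ) (f : ℝ → ℂ)
    (h : ∀ t : ℝ, f t = (a : ℂ) * Complex.exp (Complex.I * ((k : ℂ) * t))) (t : ℝ) :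
    ‖deriv f t‖ ^ 2 = (k * a) ^ 2 := by
  rw [aux_deriv a k f h, norm_mul, mul_pow, aux_norm a k f h, norm_mul, Complex.norm_I, one_mul,
    Complex.norm_real, Real.norm_eq_abs, sq_abs, mul_pow]

lemma aux_inner (a k : ℝ) (f : ℝ → ℂ)
    (h : ∀ t : ℝ, f t = (a : ℂ) * Complex.exp (Complex.I * ((k : ℂ) * t))) (t : ℝ) :
    deriv f t * (starRingEnd ℂ) (f t) = Complex.I * ((k * a ^ 2 : ℝ) : ℂ) := by
  rw [aux_deriv a k f h, mul_assoc, Complex.mul_conj, Complex.normSq_eq_norm_sq,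
    aux_norm a k f h]
  push_cast; ring

lemma aux_period (a k : ℝ) (ha : a ≠ 0) (f : ℝ → ℂ)
    (h : ∀ t : ℝ, f t = (a : ℂ) * Complex.exp (Complex.I * ((k : ℂ) * t))) (T : ℝ) :
    (∀ t, f (t + T) = f t) ↔ ∃ n : ℤ, k * T = n * (2 * Real.pi) := by
  have key : Complex.exp (Complex.I * ((k : ℂ) * T)) = 1 ↔ ∃ n : ℤ, k * T = n * (2 * Real.pi) := by
    rw [Complex.exp_eq_one_iff]
    refine exists_congr fun n => ?_
    rw [show (n : ℂ) * (2 * Real.pi * Complex.I) = Complex.I * (n * (2 * Real.pi)) by ring,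
      mul_right_inj' Complex.I_ne_zero]
    norm_cast
  rw [← key]
  have ha' : (a : ℂ) ≠ 0 := by exact_mod_cast ha
  constructor
  · intro H
    have := H 0
    rw [h, h] at this
    simpa [ha'] using this
  · intro H t
    rw [h, h]
    have : Complex.I * ((k : ℂ) * ((t + T : ℝ) : ℂ))
        = Complex.I * ((k : ℂ) * t) + Complex.I * ((k : ℂ) * T) := by push_cast; ring
    rw [this, Complex.exp_add, H, mul_one]

/-- For `δ > 0`, the curve `α(t) = (sinh δ·e^{i coth δ·t}, cosh δ·e^{i tanh δ·t})` is a
unit-speed Legendrian curve in the anti-de Sitter space H³₁, and it is periodic iff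
`tanh²δ` is rational. -/
theorem stmt_17 (δ : ℝ) (hδ : 0 < δ) (α₁ α₂ : ℝ → ℂ)
    (h₁ : ∀ t : ℝ, α₁ t = (Real.sinh δ : ℂ) *
        Complex.exp (Complex.I * ((Real.cosh δ / Real.sinh δ) * t)))
    (h₂ : ∀ t : ℝ, α₂ t = (Real.cosh δ : ℂ) *
        Complex.exp (Complex.I * (Real.tanh δ * t))) :
    (∀ t : ℝ,
      ‖α₁ t‖ ^ 2 - ‖α₂ t‖ ^ 2 = -1 ∧
      ‖deriv α₁ t‖ ^ 2 - ‖deriv α₂ t‖ ^ 2 = 1 ∧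
      deriv α₁ t * (starRingEnd ℂ) (α₁ t) - deriv α₂ t * (starRingEnd ℂ) (α₂ t) = 0) ∧
    ((∃ T > 0, ∀ t : ℝ, α₁ (t + T) = α₁ t ∧ α₂ (t + T) = α₂ t) ↔
      ∃ q : ℚ, Real.tanh δ ^ 2 = (q : ℝ)) := by
  have hs : 0 < Real.sinh δ := Real.sinh_pos_iff.2 hδ
  have hc : 0 < Real.cosh δ := Real.cosh_pos δ
  have hcs : Real.cosh δ ^ 2 = Real.sinh δ ^ 2 + 1 := Real.cosh_sq δ
  have g₁ : ∀ t : ℝ, α₁ t = (Real.sinh δ : ℂ) *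
      Complex.exp (Complex.I * (((Real.cosh δ / Real.sinh δ : ℝ) : ℂ) * t)) := by
    intro t; rw [h₁ t, Complex.ofReal_div]
  have ht : Real.tanh δ = Real.sinh δ / Real.cosh δ := Real.tanh_eq_sinh_div_cosh δ
  rw [ht] at h₂ ⊢
  have hp := Real.pi_pos
  refine ⟨fun t => ⟨?_, ?_, ?_⟩, ?_⟩
  · rw [aux_norm _ _ _ g₁, aux_norm _ _ _ h₂]; linarith
  · rw [aux_dnorm _ _ _ g₁, aux_dnorm _ _ _ h₂, div_mul_cancel₀ _ hs.ne',
      div_mul_cancel₀ _ hc.ne']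
    linarith
  · rw [aux_inner _ _ _ g₁, aux_inner _ _ _ h₂, ← mul_sub, ← Complex.ofReal_sub]
    have : Real.cosh δ / Real.sinh δ * Real.sinh δ ^ 2
        - Real.sinh δ / Real.cosh δ * Real.cosh δ ^ 2 = 0 := by
      field_simp
      ring
    rw [this]; simp
  · simp only [forall_and]
    simp only [aux_period _ _ hs.ne' _ g₁, aux_period _ _ hc.ne' _ h₂]
    constructor
    · rintro ⟨T, hT, ⟨n, hn⟩, ⟨m, hm⟩⟩
      refine ⟨(m : ℚ) / n, ?_⟩
      have hpos : 0 < Real.cosh δ / Real.sinh δ * T := by positivity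
      have hn0 : (n : ℝ) ≠ 0 := by
        intro h0
        rw [hn, h0, zero_mul] at hpos
        exact lt_irrefl _ hpos
      push_cast
      rw [eq_div_iff hn0]
      have e : (Real.sinh δ / Real.cosh δ) ^ 2 * (Real.cosh δ / Real.sinh δ * T)
          = Real.sinh δ / Real.cosh δ * T := by field_simp
      rw [hn, hm] at e
      have h2 : (2 * Real.pi) ≠ 0 := by positivity
      apply mul_right_cancel₀ h2
      linarith
    · rintro ⟨q, hq⟩
      have hd : (0 : ℝ) < q.den := by exact_mod_cast q.den_pos
      have hqd : (q : ℝ) * q.den = q.num := by exact_mod_cast Rat.mul_den_eq_num q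
      refine ⟨q.den * (2 * Real.pi) * (Real.sinh δ / Real.cosh δ), by positivity,
        ⟨q.den, ?_⟩, ⟨q.num, ?_⟩⟩
      · push_cast
        field_simp
      · rw [← hqd, ← hq]
        ring
end

section
/- Let n₁, n₂ ≥ 1, U ⊆ ℝ² open and φ = (φ₁, φ₂) : U → ℂ² continuously differentiable with Im(∂_μφ, ∂_νφ) = 0 for μ, ν ∈ {1,2} (φ is Lagrangian in ℂ²). Let U₁ ⊆ ℝ^{n₁−1}, U₂ ⊆ ℝ^{n₂−1} be open and ψᵢ : Uᵢ → ℂ^{nᵢ} (i = 1,2) continuously differentiable with |ψᵢ| = 1, Im(∂ₐψᵢ, ψᵢ) = 0 (Legendrian) and Im(∂ₐψᵢ, ∂_bψᵢ) = 0 (isotropic) for all indices. Define Φ : U × U₁ × U₂ → ℂ^{n₁+n₂} by Φ(p, x, y) = (φ₁(p)·ψ₁(x), φ₂(p)·ψ₂(y)). Then for all points: (∂_μΦ, ∂_νΦ) = (∂_μφ, ∂_νφ); (∂_μΦ, ∂ₐΦ) = 0 for every partial derivative ∂ₐ in the U₁ variables; (∂_μΦ, ∂ⱼΦ) = 0 for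 every partial derivative ∂ⱼ in the U₂ variables; (∂ₐΦ, ∂ⱼΦ) = 0; (∂ₐΦ, ∂_bΦ) = |φ₁(p)|²·(∂ₐψ₁, ∂_bψ₁); and (∂ⱼΦ, ∂ₖΦ) = |φ₂(p)|²·(∂ⱼψ₂, ∂ₖψ₂). In particular all these Hermitian products have vanishing imaginary part, so Φ is a Lagrangian immersion into ℂ^{n₁+n₂} with induced metric ḡ = g + |φ₁|²·g₁ + |φ₂|²·g₂, where g, g₁, g₂ are the metrics induced by φ, ψ₁, ψ₂. -/
open scoped BigOperators

/-- The Hermitian product on ℂⁿ: (z,w) = Σⱼ zⱼ·conj(wⱼ). -/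
noncomputable def herm {n : ℕ} (z w : Fin n → ℂ) : ℂ :=
  ∑ j, z j * (starRingEnd ℂ) (w j)

/-- The Hermitian product on ℂ^{n₁} × ℂ^{n₂} = ℂ^{n₁+n₂}. -/
noncomputable def hermP {n₁ n₂ : ℕ} (z w : (Fin n₁ → ℂ) × (Fin n₂ → ℂ)) : ℂ :=
  herm z.1 w.1 + herm z.2 w.2

/-- The standard basis of ℝ². -/
noncomputable def e2 : Fin 2 → ℝ × ℝ := ![(1, 0), (0, 1)]

lemma herm_smul_smul {n : ℕ} (c d : ℂ) (z w : Fin n → ℂ) :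
    herm (c • z) (d • w) = c * (starRingEnd ℂ) d * herm z w := by
  simp only [herm, Finset.mul_sum, Pi.smul_apply, smul_eq_mul, map_mul]
  exact Finset.sum_congr rfl fun j _ => by ring

lemma herm_zero_left {n : ℕ} (w : Fin n → ℂ) : herm 0 w = 0 := by simp [herm]

lemma herm_zero_right {n : ℕ} (w : Fin n → ℂ) : herm w 0 = 0 := by simp [herm]

lemma herm_conj {n : ℕ} (z w : Fin n → ℂ) : (starRingEnd ℂ) (herm z w) = herm w z := by
  simp only [herm, map_sum, map_mul, Complex.conj_conj]
  exact Finset.sum_congr rfl fun j _ => by ring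

/-- On the unit sphere the derivative is Hermitian-orthogonal to the position (Legendrian case). -/
lemma herm_deriv_pos {m n : ℕ} (V : Set (Fin m → ℝ)) (hV : IsOpen V)
    (ψ : (Fin m → ℝ) → Fin n → ℂ) (x : Fin m → ℝ) (hx : x ∈ V)
    (hψ : DifferentiableAt ℝ ψ x) (hs : ∀ x ∈ V, herm (ψ x) (ψ x) = 1) (v : Fin m → ℝ)
    (him : (herm (fderiv ℝ ψ x v) (ψ x)).im = 0) : herm (fderiv ℝ ψ x v) (ψ x) = 0 := by
  have hc : ∀ j, HasFDerivAt (fun x => ψ x j)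
      ((ContinuousLinearMap.proj (R := ℝ) j).comp (fderiv ℝ ψ x)) x :=
    fun j => hasFDerivAt_pi'.1 hψ.hasFDerivAt j
  have hstar : ∀ j, HasFDerivAt (fun x => (starRingEnd ℂ) (ψ x j))
      ((Complex.conjCLE : ℂ →L[ℝ] ℂ).comp
        ((ContinuousLinearMap.proj (R := ℝ) j).comp (fderiv ℝ ψ x))) x :=
    fun j => (Complex.conjCLE : ℂ →L[ℝ] ℂ).hasFDerivAt.comp x (hc j)
  have hd := HasFDerivAt.fun_sum (u := Finset.univ) fun j _ => (hc j).mul (hstar j)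
  have h1 : (fun x => herm (ψ x) (ψ x)) =ᶠ[nhds x] fun _ => (1 : ℂ) :=
    Filter.eventually_of_mem (hV.mem_nhds hx) hs
  have h0 : HasFDerivAt (fun x => herm (ψ x) (ψ x)) (0 : (Fin m → ℝ) →L[ℝ] ℂ) x :=
    (hasFDerivAt_const (1 : ℂ) x).congr_of_eventuallyEq h1
  have he := DFunLike.congr_fun (h0.unique hd) v
  have hsum : herm (fderiv ℝ ψ x v) (ψ x) + herm (ψ x) (fderiv ℝ ψ x v) = 0 := by
    rw [herm, herm, ← Finset.sum_add_distrib]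
    simp only [ContinuousLinearMap.sum_apply, ContinuousLinearMap.zero_apply] at he
    rw [he]
    refine Finset.sum_congr rfl fun j _ => ?_
    simp
    ring
  rw [← herm_conj (fderiv ℝ ψ x v) (ψ x)] at hsum
  have hre := congrArg Complex.re hsum
  simp at hre
  exact Complex.ext (by simpa using by linarith) (by simpa using him)

/-- Given a Lagrangian immersion `φ = (φ₁,φ₂) : U → ℂ²` and Legendrian (isotropic,
spherical) immersions `ψᵢ : Uᵢ → ℂ^{nᵢ}`, the map
`Φ(p,x,y) = (φ₁(p)ψ₁(x), φ₂(p)ψ₂(y))` has Hermitian products of partial derivatives: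
`(∂_μΦ,∂_νΦ) = (∂_μφ,∂_νφ)`, the mixed products vanish,
`(∂ₐΦ,∂_bΦ) = |φ₁|²(∂ₐψ₁,∂_bψ₁)` and `(∂ⱼΦ,∂ₖΦ) = |φ₂|²(∂ⱼψ₂,∂ₖψ₂)`; so Φ is a
Lagrangian immersion into ℂ^{n₁+n₂} with induced metric `g + |φ₁|²g₁ + |φ₂|²g₂`. -/
theorem stmt_18 (n₁ n₂ : ℕ) (h₁ : 1 ≤ n₁) (h₂ : 1 ≤ n₂)
    (U : Set (ℝ × ℝ)) (hU : IsOpen U)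
    (φ₁ φ₂ : ℝ × ℝ → ℂ)
    (hφ₁ : ContDiffOn ℝ 1 φ₁ U) (hφ₂ : ContDiffOn ℝ 1 φ₂ U)
    (φ : ℝ × ℝ → ℂ × ℂ) (hφ : ∀ p, φ p = (φ₁ p, φ₂ p))
    (hLag : ∀ p ∈ U, ∀ μ ν : Fin 2,
      (herm2 (fderiv ℝ φ p (e2 μ)) (fderiv ℝ φ p (e2 ν))).im = 0)
    (U₁ : Set (Fin (n₁ - 1) → ℝ)) (hU₁ : IsOpen U₁)
    (U₂ : Set (Fin (n₂ - 1) → ℝ)) (hU₂ : IsOpen U₂)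
    (ψ₁ : (Fin (n₁ - 1) → ℝ) → Fin n₁ → ℂ) (hψ₁ : ContDiffOn ℝ 1 ψ₁ U₁)
    (ψ₂ : (Fin (n₂ - 1) → ℝ) → Fin n₂ → ℂ) (hψ₂ : ContDiffOn ℝ 1 ψ₂ U₂)
    (hs₁ : ∀ x ∈ U₁, herm (ψ₁ x) (ψ₁ x) = 1)
    (hs₂ : ∀ y ∈ U₂, herm (ψ₂ y) (ψ₂ y) = 1)
    (hLeg₁ : ∀ x ∈ U₁, ∀ a, (herm (fderiv ℝ ψ₁ x (Pi.single a 1)) (ψ₁ x)).im = 0)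
    (hLeg₂ : ∀ y ∈ U₂, ∀ j, (herm (fderiv ℝ ψ₂ y (Pi.single j 1)) (ψ₂ y)).im = 0)
    (hiso₁ : ∀ x ∈ U₁, ∀ a b,
      (herm (fderiv ℝ ψ₁ x (Pi.single a 1)) (fderiv ℝ ψ₁ x (Pi.single b 1))).im = 0)
    (hiso₂ : ∀ y ∈ U₂, ∀ j k,
      (herm (fderiv ℝ ψ₂ y (Pi.single j 1)) (fderiv ℝ ψ₂ y (Pi.single k 1))).im = 0)
    (Φ : (ℝ × ℝ) × (Fin (n₁ - 1) → ℝ) × (Fin (n₂ - 1) → ℝ) →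
      (Fin n₁ → ℂ) × (Fin n₂ → ℂ))
    (hΦ : ∀ q, Φ q = (fun i => φ₁ q.1 * ψ₁ q.2.1 i, fun i => φ₂ q.1 * ψ₂ q.2.2 i)) :
    ∀ p ∈ U, ∀ x ∈ U₁, ∀ y ∈ U₂,
      (∀ μ ν : Fin 2,
        hermP (fderiv ℝ Φ (p, x, y) (e2 μ, 0, 0)) (fderiv ℝ Φ (p, x, y) (e2 ν, 0, 0))
          = herm2 (fderiv ℝ φ p (e2 μ)) (fderiv ℝ φ p (e2 ν))) ∧
      (∀ (μ : Fin 2) (a : Fin (n₁ - 1)),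
        hermP (fderiv ℝ Φ (p, x, y) (e2 μ, 0, 0))
            (fderiv ℝ Φ (p, x, y) (0, Pi.single a 1, 0)) = 0) ∧
      (∀ (μ : Fin 2) (j : Fin (n₂ - 1)),
        hermP (fderiv ℝ Φ (p, x, y) (e2 μ, 0, 0))
            (fderiv ℝ Φ (p, x, y) (0, 0, Pi.single j 1)) = 0) ∧
      (∀ (a : Fin (n₁ - 1)) (j : Fin (n₂ - 1)),
        hermP (fderiv ℝ Φ (p, x, y) (0, Pi.single a 1, 0))
            (fderiv ℝ Φ (p, x, y) (0, 0, Pi.single j 1)) = 0) ∧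
      (∀ a b : Fin (n₁ - 1),
        hermP (fderiv ℝ Φ (p, x, y) (0, Pi.single a 1, 0))
            (fderiv ℝ Φ (p, x, y) (0, Pi.single b 1, 0))
          = ((‖φ₁ p‖ ^ 2 : ℝ) : ℂ) *
              herm (fderiv ℝ ψ₁ x (Pi.single a 1)) (fderiv ℝ ψ₁ x (Pi.single b 1))) ∧
      (∀ j k : Fin (n₂ - 1),
        hermP (fderiv ℝ Φ (p, x, y) (0, 0, Pi.single j 1))
            (fderiv ℝ Φ (p, x, y) (0, 0, Pi.single k 1))
          = ((‖φ₂ p‖ ^ 2 : ℝ) : ℂ) *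
              herm (fderiv ℝ ψ₂ y (Pi.single j 1)) (fderiv ℝ ψ₂ y (Pi.single k 1))) := by
  intro p hp x hx y hy
  have dφ₁ : DifferentiableAt ℝ φ₁ p :=
    (hφ₁.differentiableOn (by norm_num)).differentiableAt (hU.mem_nhds hp)
  have dφ₂ : DifferentiableAt ℝ φ₂ p :=
    (hφ₂.differentiableOn (by norm_num)).differentiableAt (hU.mem_nhds hp)
  have dψ₁ : DifferentiableAt ℝ ψ₁ x :=
    (hψ₁.differentiableOn (by norm_num)).differentiableAt (hU₁.mem_nhds hx)
  have dψ₂ : DifferentiableAt ℝ ψ₂ y :=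
    (hψ₂.differentiableOn (by norm_num)).differentiableAt (hU₂.mem_nhds hy)
  have eφ : ∀ u, fderiv ℝ φ p u = (fderiv ℝ φ₁ p u, fderiv ℝ φ₂ p u) := by
    intro u
    have : φ = fun p => (φ₁ p, φ₂ p) := funext hφ
    rw [this, (dφ₁.hasFDerivAt.prodMk dφ₂.hasFDerivAt).fderiv]
    rfl
  have eΦ : ∀ u v w, fderiv ℝ Φ (p, x, y) (u, v, w) =
      (φ₁ p • fderiv ℝ ψ₁ x v + fderiv ℝ φ₁ p u • ψ₁ x,
        φ₂ p • fderiv ℝ ψ₂ y w + fderiv ℝ φ₂ p u • ψ₂ y) := by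
    intro u v w
    have hf : Φ = fun q => (φ₁ q.1 • ψ₁ q.2.1, φ₂ q.1 • ψ₂ q.2.2) := by
      funext q
      rw [hΦ]
      rfl
    let q₀ : (ℝ × ℝ) × (Fin (n₁ - 1) → ℝ) × (Fin (n₂ - 1) → ℝ) := (p, x, y)
    have f1 : HasFDerivAt (fun q : (ℝ × ℝ) × (Fin (n₁ - 1) → ℝ) × (Fin (n₂ - 1) → ℝ) => q.1)
      (ContinuousLinearMap.fst ℝ _ _) q₀ := hasFDerivAt_fst
    have f2 : HasFDerivAt (fun q : (ℝ × ℝ) × (Fin (n₁ - 1) → ℝ) × (Fin (n₂ - 1) → ℝ) => q.2)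
      (ContinuousLinearMap.snd ℝ _ _) q₀ := hasFDerivAt_snd
    have a1 := HasFDerivAt.comp (g := φ₁) q₀ dφ₁.hasFDerivAt f1
    have a2 := HasFDerivAt.comp (g := φ₂) q₀ dφ₂.hasFDerivAt f1
    have b1 := HasFDerivAt.comp (g := ψ₁) q₀ dψ₁.hasFDerivAt f2.fst
    have b2 := HasFDerivAt.comp (g := ψ₂) q₀ dψ₂.hasFDerivAt f2.snd
    have key := (a1.smul b1).prodMk (a2.smul b2)
    have key' : HasFDerivAt Φ _ q₀ := hf ▸ key
    rw [key'.fderiv]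
    rfl
  have o₁ : ∀ a, herm (fderiv ℝ ψ₁ x (Pi.single a 1)) (ψ₁ x) = 0 := fun a =>
    herm_deriv_pos U₁ hU₁ ψ₁ x hx dψ₁ hs₁ _ (hLeg₁ x hx a)
  have o₂ : ∀ a, herm (fderiv ℝ ψ₂ y (Pi.single a 1)) (ψ₂ y) = 0 := fun a =>
    herm_deriv_pos U₂ hU₂ ψ₂ y hy dψ₂ hs₂ _ (hLeg₂ y hy a)
  have o₁' : ∀ a, herm (ψ₁ x) (fderiv ℝ ψ₁ x (Pi.single a 1)) = 0 := fun a => by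
    rw [← herm_conj, o₁, map_zero]
  have o₂' : ∀ a, herm (ψ₂ y) (fderiv ℝ ψ₂ y (Pi.single a 1)) = 0 := fun a => by
    rw [← herm_conj, o₂, map_zero]
  simp only [eΦ, eφ, map_zero, smul_zero, zero_smul, zero_add, add_zero, hermP, herm2,
    herm_smul_smul, herm_zero_left, herm_zero_right, hs₁ x hx, hs₂ y hy, o₁', o₂', mul_one,
    mul_zero, Complex.mul_conj, Complex.normSq_eq_norm_sq, implies_true, true_and, and_self]
end
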